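/- arXiv:1810.12475 — 2 statements merged into one kernel-verified Lean document; each statement's English description precedes it below -/
import Mathlib

section
/- For every integer w and every positive integer u, one has T(w,u,0) = 0. -/
open Finset

noncomputable section

/-- The field `ℚ(q)` of rational functions over `ℚ`. -/
abbrev F : Type := RatFunc ℚ

/-- The indeterminate `q`. -/
noncomputable def qq : F := RatFunc.X

/-- The quantum integer `[n]` with base `v`: `(v^n - v^(-n))/(v - v⁻¹)`. -/
noncomputable def qint (v : F) (n : ℤ) : F := (v ^ n - v ^ (-n)) / (v - v⁻¹)

/-- The quantum factorial `[m]! = [1][2]⋯[m]` with base `v`. -/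
noncomputable def qfact (v : F) (m : ℕ) : F := ∏ k ∈ range m, qint v ((k : ℤ) + 1)

/-- The quantum binomial coefficient `C_v(n,d) = [n][n-1]⋯[n-d+1]/[d]!` for `d ≥ 0`,
and `0` for `d < 0`. -/
noncomputable def qbinom (v : F) (n d : ℤ) : F :=
  if d < 0 then 0
  else (∏ k ∈ range d.toNat, qint v (n - (k : ℤ))) / qfact v d.toNat

/-- The function `T(w,u,ℓ)` of [CLW, (3.14)]. -/
noncomputable def T (w : ℤ) (u ℓ : ℕ) : F :=
  (∑ c ∈ range (u + 1), ∑ e ∈ range (u + 1 - c), ∑ t ∈ range (ℓ + 1),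
      (let r : ℕ := u - c - e;
       if Even ((t : ℤ) + w - (r : ℤ)) then
         qq ^ (-(t : ℤ) * ((ℓ : ℤ) + (u : ℤ) - 1) + ((ℓ : ℤ) + (u : ℤ)) * ((c : ℤ) - (e : ℤ)))
           * qbinom qq (ℓ : ℤ) (t : ℤ) * qbinom qq (w + (t : ℤ) - (ℓ : ℤ)) (r : ℤ)
           * qbinom (qq ^ 2) ((u : ℤ) - 1 + (w + (t : ℤ) - (r : ℤ)) / 2) (c : ℤ)
           * qbinom (qq ^ 2) ((w + (t : ℤ) - (r : ℤ)) / 2 - (ℓ : ℤ)) (e : ℤ)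
       else 0))
  - (∑ c ∈ range (u + 1), ∑ e ∈ range (u + 1 - c), ∑ t ∈ range (ℓ + 1),
      (let r : ℕ := u - c - e;
       if ¬ Even ((t : ℤ) + w - (r : ℤ)) then
         qq ^ (-(t : ℤ) * ((ℓ : ℤ) + (u : ℤ) - 1) + ((ℓ : ℤ) + (u : ℤ) - 1) * ((c : ℤ) - (e : ℤ)))
           * qbinom qq (ℓ : ℤ) (t : ℤ) * qbinom qq (w + (t : ℤ) - (ℓ : ℤ)) (r : ℤ)
           * qbinom (qq ^ 2) ((u : ℤ) + (w + (t : ℤ) - (r : ℤ) - 1) / 2) (c : ℤ)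
           * qbinom (qq ^ 2) ((w + (t : ℤ) - (r : ℤ) - 1) / 2 - (ℓ : ℤ)) (e : ℤ)
       else 0))

/-!
At `ℓ = 0` only `t = 0` survives. Put `n = w - r`. Whatever the parity of `n`, the sum over `c` and
`e` is a coefficient of the same product of generating series of quantum binomials: the `q²`-series
with upper index `u - 1` splits off by `q`-Chu–Vandermonde, and the two `q²`-series that remain
multiply to the `q`-series with upper index `n`, because `∏ (1 + q^(n-1-2k) X)` is the product of
its factors with `k` even and with `k` odd. Hence

  `T(w,u,0) = ∑_{i+j+r=u} (-1)^(w-r) q^((u+w-r)j + (1-u)i) C_q(w,r) C_{q²}(u-1,j) C_q(w-r,i)`.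

For fixed `j < u`, trinomial revision turns `C_q(w,r) C_q(w-r,i)` into `C_q(w,k) C_q(k,r)` with
`k = u - j`, and the alternating sum `∑ r, (-1)^r q^(r(k-1)) C_q(k,r)` vanishes; for `j = u` the
factor `C_{q²}(u-1,u)` is zero.

Injectivity of `n ↦ v ^ n` on `ℤ` says that `v` is neither zero nor a root of unity.
-/

section AntidiagonalSums

variable {A M : Type*} [AddCommMonoid M]

theorem sum_antidiagonal_sum_antidiagonal_assoc [AddMonoid A] [HasAntidiagonal A] (n : A)
    (f : A → A → A → M) :
    ∑ p ∈ antidiagonal n, ∑ x ∈ antidiagonal p.2, f p.1 x.1 x.2 =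
      ∑ p ∈ antidiagonal n, ∑ x ∈ antidiagonal p.1, f x.1 x.2 p.2 := by
  rw [sum_sigma', sum_sigma']
  refine sum_nbij' (fun a ↦ ⟨(a.1.1 + a.2.1, a.2.2), (a.1.1, a.2.1)⟩)
    (fun a ↦ ⟨(a.2.1, a.2.2 + a.1.2), (a.2.2, a.1.2)⟩) ?_ ?_ ?_ ?_ ?_ <;>
    simp only [mem_sigma, HasAntidiagonal.mem_antidiagonal, Sigma.forall, Prod.forall] <;>
    rintro a b c d ⟨rfl, rfl⟩ <;> simp [add_assoc]

theorem sum_range_sum_range_eq_sum_antidiagonal (n : ℕ) (f : ℕ → ℕ → ℕ → M) :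
    ∑ i ∈ range (n + 1), ∑ j ∈ range (n + 1 - i), f i j (n - i - j) =
      ∑ p ∈ antidiagonal n, ∑ x ∈ antidiagonal p.1, f x.1 x.2 p.2 := by
  rw [← sum_antidiagonal_sum_antidiagonal_assoc, Nat.sum_antidiagonal_eq_sum_range_succ_mk]
  refine sum_congr rfl fun i hi ↦ ?_
  rw [Nat.sum_antidiagonal_eq_sum_range_succ_mk, Nat.succ_sub (by grind)]

end AntidiagonalSums

section PowerSeriesRecurrence

open PowerSeries

theorem one_add_C_mul_X_ne_zero {R : Type*} [Semiring R] [Nontrivial R] (a : R) :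
    (1 + C a * X : R⟦X⟧) ≠ 0 := fun h ↦ by
  simpa using congrArg (coeff 0) h

theorem rescale_one_add_C_mul_X {R : Type*} [CommRing R] (a b : R) :
    rescale a (1 + C b * X) = 1 + C (a * b) * X := by
  have rescale_C : rescale a (C b) = C b := by
    ext (_ | n) <;> simp [coeff_rescale, coeff_C]
  rw [map_add, map_mul, map_one, rescale_C, rescale_X, mul_left_comm, ← mul_assoc, ← map_mul]

/-- Since `L n ≠ 0` and `a ≠ 0`, the recurrence also determines `f n` from `f (n + 1)`. -/
theorem eq_of_forall_add_one_eq_mul_rescale {R : Type*} [CommRing R] [IsDomain R] {a : R}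
    (ha : a ≠ 0) {f g L : ℤ → R⟦X⟧} (hL : ∀ n, L n ≠ 0) (h₀ : f 0 = g 0)
    (hf : ∀ n, f (n + 1) = L n * rescale a (f n))
    (hg : ∀ n, g (n + 1) = L n * rescale a (g n)) (n : ℤ) : f n = g n := by
  have step (n : ℤ) : f n = g n ↔ f (n + 1) = g (n + 1) := by
    rw [hf, hg, mul_right_inj' (hL n), (rescale_injective ha).eq_iff]
  induction n using Int.induction_on with
  | zero => exact h₀
  | succ n ih => exact (step n).1 ih
  | pred n ih => exact (step _).2 (by simpa using ih)

end PowerSeriesRecurrence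

section ZPowInjective

open Function

theorem ne_zero_of_zpow_injective {G₀ : Type*} [GroupWithZero G₀] {v : G₀}
    (hv : Injective (v ^ · : ℤ → G₀)) : v ≠ 0 := by
  rintro rfl
  exact absurd (@hv 1 2 (by simp)) (by decide)

theorem sq_zpow {G : Type*} [DivisionMonoid G] (v : G) (n : ℤ) : (v ^ 2) ^ n = v ^ (2 * n) := by
  rw [zpow_mul, zpow_ofNat]

theorem sq_zpow_injective {G : Type*} [DivisionMonoid G] {v : G}
    (hv : Injective (v ^ · : ℤ → G)) : Injective ((v ^ 2) ^ · : ℤ → G) := fun m n h ↦ by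
  simp only [sq_zpow] at h
  exact mul_left_cancel₀ two_ne_zero (hv h)

theorem qq_zpow_injective : Injective (qq ^ · : ℤ → F) := fun m n h ↦ by
  classical simpa [qq] using congrArg (RatFunc.inftyValuation ℚ) h

end ZPowInjective

section QuantumBinomials

open Function

variable {v : F}

@[simp] theorem qint_zero (v : F) : qint v 0 = 0 := by simp [qint]

theorem qint_ne_zero (hv : Injective (v ^ · : ℤ → F)) {n : ℤ} (hn : n ≠ 0) : qint v n ≠ 0 := by
  have zpow_sub_zpow_neg_ne_zero {m : ℤ} (hm : m ≠ 0) : v ^ m - v ^ (-m) ≠ 0 :=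
    sub_ne_zero.2 (hv.ne (by omega))
  exact div_ne_zero (zpow_sub_zpow_neg_ne_zero hn)
    (by simpa using zpow_sub_zpow_neg_ne_zero one_ne_zero)

theorem qint_add_one (hv₀ : v ≠ 0) (n d : ℤ) :
    qint v (n + 1) = v ^ (d + 1) * qint v (n - d) + v ^ (d - n) * qint v (d + 1) := by
  simp only [qint, ← mul_div_assoc, ← add_div, mul_sub, ← zpow_add₀ hv₀]
  ring_nf

theorem qfact_succ (v : F) (m : ℕ) : qfact v (m + 1) = qfact v m * qint v (m + 1) :=
  prod_range_succ _ _

theorem qfact_ne_zero (hv : Injective (v ^ · : ℤ → F)) (m : ℕ) : qfact v m ≠ 0 :=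
  prod_ne_zero_iff.2 fun _ _ ↦ qint_ne_zero hv (by omega)

theorem qbinom_natCast (v : F) (n : ℤ) (d : ℕ) :
    qbinom v n d = (∏ k ∈ range d, qint v (n - k)) / qfact v d := by
  simp [qbinom]

@[simp] theorem qbinom_zero_right (v : F) (n : ℤ) : qbinom v n 0 = 1 := by
  simp [qbinom, qfact]

theorem qbinom_eq_zero_of_lt (v : F) {n d : ℕ} (h : n < d) : qbinom v n d = 0 := by
  rw [qbinom_natCast, prod_eq_zero (mem_range.2 h) (by simp), zero_div]

theorem qint_mul_qbinom_succ (hv : Injective (v ^ · : ℤ → F)) (n : ℤ) (d : ℕ) :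
    qint v (d + 1) * qbinom v n (d + 1 : ℕ) = qint v (n - d) * qbinom v n d := by
  have hd : qint v (d + 1) ≠ 0 := qint_ne_zero hv (by omega)
  have := qfact_ne_zero hv d
  rw [qbinom_natCast, qbinom_natCast, prod_range_succ, qfact_succ]
  field_simp

theorem qint_mul_qbinom_succ_succ (hv : Injective (v ^ · : ℤ → F)) (n : ℤ) (d : ℕ) :
    qint v (d + 1) * qbinom v (n + 1) (d + 1 : ℕ) = qint v (n + 1) * qbinom v n d := by
  have hd : qint v (d + 1) ≠ 0 := qint_ne_zero hv (by omega)
  have := qfact_ne_zero hv d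
  rw [qbinom_natCast, qbinom_natCast, prod_range_succ', qfact_succ]
  simp only [Nat.cast_add, Nat.cast_one, Nat.cast_zero, add_sub_add_right_eq_sub, sub_zero]
  field_simp

theorem qint_sub_mul_qbinom_succ_left (hv : Injective (v ^ · : ℤ → F)) (n : ℤ) (d : ℕ) :
    qint v (n + 1 - d) * qbinom v (n + 1) d = qint v (n + 1) * qbinom v n d := by
  rw [← qint_mul_qbinom_succ hv, qint_mul_qbinom_succ_succ hv]

theorem qbinom_succ_succ (hv : Injective (v ^ · : ℤ → F)) (n : ℤ) (d : ℕ) :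
    qbinom v (n + 1) (d + 1 : ℕ) =
      v ^ (d + 1) * qbinom v n (d + 1 : ℕ) + v ^ (d - n) * qbinom v n d := by
  have hd : qint v (d + 1) ≠ 0 := qint_ne_zero hv (by omega)
  have expand := qint_add_one (ne_zero_of_zpow_injective hv) n d
  have zpow_cast : v ^ ((d : ℤ) + 1) = v ^ (d + 1) := by norm_cast
  rw [zpow_cast] at expand
  refine mul_left_cancel₀ hd ?_
  linear_combination qint_mul_qbinom_succ_succ hv n d + qbinom v n d * expand -
    v ^ (d + 1) * qint_mul_qbinom_succ hv n d

theorem qbinom_self (hv : Injective (v ^ · : ℤ → F)) (n : ℕ) : qbinom v n n = 1 := by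
  induction n with
  | zero => simp
  | succ n ih =>
    have hn : qint v (n + 1) ≠ 0 := qint_ne_zero hv (by omega)
    refine mul_left_cancel₀ hn ?_
    simpa [ih] using qint_mul_qbinom_succ_succ hv n n

theorem qbinom_mul_qbinom_sub (hv : Injective (v ^ · : ℤ → F)) (n : ℤ) (r i : ℕ) :
    qbinom v n r * qbinom v (n - r) i = qbinom v n (r + i : ℕ) * qbinom v (r + i : ℕ) r := by
  induction i with
  | zero => simp [qbinom_self hv]
  | succ i ih =>
    have hi : qint v (i + 1) ≠ 0 := qint_ne_zero hv (by omega)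
    have lower := qint_mul_qbinom_succ hv (n - r) i
    have upper := qint_mul_qbinom_succ hv n (r + i)
    have absorb := qint_sub_mul_qbinom_succ_left hv (r + i : ℕ) r
    rw [show ((r + i : ℕ) + 1 - r : ℤ) = i + 1 by push_cast; ring] at absorb
    rw [show n - r - i = n - (r + i : ℕ) by push_cast; ring] at lower
    refine mul_left_cancel₀ hi ?_
    rw [← Nat.cast_succ (r + i)] at absorb upper
    rw [← add_assoc]
    linear_combination qbinom v n r * lower + qint v (n - (r + i : ℕ)) * ih -
      qbinom v (r + i : ℕ) r * upper - qbinom v n (r + i + 1 : ℕ) * absorb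

theorem sum_range_neg_one_pow_mul_qbinom (hv : Injective (v ^ · : ℤ → F)) (k N : ℕ) :
    ∑ r ∈ range (N + 1), (-1) ^ r * v ^ (r * k) * qbinom v (k + 1 : ℕ) r =
      (-1) ^ N * v ^ (N * (k + 1)) * qbinom v k N := by
  have hv₀ := ne_zero_of_zpow_injective hv
  induction N with
  | zero => simp
  | succ N ih =>
    have pascal := qbinom_succ_succ hv k N
    rw [zpow_sub₀ hv₀, zpow_natCast, zpow_natCast] at pascal
    rw [sum_range_succ, ih, Nat.cast_succ k, pascal]
    field_simp
    ring

theorem sum_antidiagonal_neg_one_pow_mul_qbinom_mul_qbinom (hv : Injective (v ^ · : ℤ → F))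
    (n : ℤ) (k : ℕ) :
    ∑ p ∈ antidiagonal (k + 1),
      (-1) ^ p.1 * v ^ (p.1 * k) * (qbinom v n p.1 * qbinom v (n - p.1) p.2) = 0 := by
  have revise : ∀ p ∈ antidiagonal (k + 1),
      (-1) ^ p.1 * v ^ (p.1 * k) * (qbinom v n p.1 * qbinom v (n - p.1) p.2) =
        qbinom v n (k + 1 : ℕ) * ((-1) ^ p.1 * v ^ (p.1 * k) * qbinom v (k + 1 : ℕ) p.1) := by
    intro p hp
    rw [qbinom_mul_qbinom_sub hv, HasAntidiagonal.mem_antidiagonal.1 hp]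
    ring
  rw [sum_congr rfl revise, ← mul_sum, Nat.sum_antidiagonal_eq_sum_range_succ_mk,
    sum_range_neg_one_pow_mul_qbinom hv, qbinom_eq_zero_of_lt v k.lt_succ_self, mul_zero, mul_zero]

end QuantumBinomials

section GeneratingSeries

open Function PowerSeries

variable {v : F}

/-- The generating series `∑ d, C_v(n,d) X^d` of the quantum binomial coefficients with upper
index `n`. -/
def qbinomSeries (v : F) (n : ℤ) : F⟦X⟧ := PowerSeries.mk fun d ↦ qbinom v n d

@[simp] theorem qbinomSeries_zero (v : F) : qbinomSeries v 0 = 1 := by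
  ext (_ | d)
  · simp [qbinomSeries]
  · simpa [qbinomSeries, coeff_one] using qbinom_eq_zero_of_lt v d.succ_pos

theorem qbinomSeries_add_one (hv : Injective (v ^ · : ℤ → F)) (n : ℤ) :
    qbinomSeries v (n + 1) = (1 + C (v ^ (-n)) * X) * rescale v (qbinomSeries v n) := by
  ext (_ | d)
  · simp [qbinomSeries, add_mul, mul_assoc, -coeff_zero_eq_constantCoeff, coeff_rescale,
      coeff_zero_X_mul]
  · rw [add_mul, one_mul, mul_assoc, map_add, coeff_C_mul, coeff_succ_X_mul]
    simp only [qbinomSeries, coeff_rescale, coeff_mk]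
    rw [qbinom_succ_succ hv, sub_eq_neg_add, zpow_add₀ (ne_zero_of_zpow_injective hv),
      zpow_natCast, mul_assoc]

/-- The `q`-Chu–Vandermonde identity. -/
theorem qbinomSeries_add (hv : Injective (v ^ · : ℤ → F)) (a b : ℤ) :
    qbinomSeries v (a + b) =
      rescale (v ^ b) (qbinomSeries v a) * rescale (v ^ (-a)) (qbinomSeries v b) := by
  have hv₀ := ne_zero_of_zpow_injective hv
  refine eq_of_forall_add_one_eq_mul_rescale (f := fun b ↦ qbinomSeries v (a + b))
    (g := fun b ↦ rescale (v ^ b) (qbinomSeries v a) * rescale (v ^ (-a)) (qbinomSeries v b))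
    (L := fun b ↦ 1 + C (v ^ (-(a + b))) * X) hv₀ (fun _ ↦ one_add_C_mul_X_ne_zero _)
    (by simp) (fun b ↦ ?_) (fun b ↦ ?_) b
  · rw [← add_assoc, qbinomSeries_add_one hv]
  · simp only [qbinomSeries_add_one hv b, map_mul, rescale_one_add_C_mul_X, rescale_rescale,
      neg_add, zpow_add₀ hv₀, zpow_one, mul_comm v]
    ring

theorem qbinomSeries_two_mul (hv : Injective (v ^ · : ℤ → F)) (s : ℤ) :
    qbinomSeries v (2 * s) =
      rescale v (qbinomSeries (v ^ 2) s) * rescale v⁻¹ (qbinomSeries (v ^ 2) s) := by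
  have hv₀ := ne_zero_of_zpow_injective hv
  have h₁ (s : ℤ) : v * v ^ (-(2 * s)) = v ^ (1 - 2 * s) := by
    rw [sub_eq_add_neg, zpow_one_add₀ hv₀]
  have h₂ (s : ℤ) : v⁻¹ * v ^ (-(2 * s)) = v ^ (-(2 * s + 1)) := by
    rw [neg_add_rev, zpow_add₀ hv₀, zpow_neg_one]
  refine eq_of_forall_add_one_eq_mul_rescale (f := fun s ↦ qbinomSeries v (2 * s))
    (g := fun s ↦ rescale v (qbinomSeries (v ^ 2) s) * rescale v⁻¹ (qbinomSeries (v ^ 2) s))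
    (L := fun s ↦ (1 + C (v ^ (-(2 * s + 1))) * X) * (1 + C (v ^ (1 - 2 * s)) * X))
    (pow_ne_zero 2 hv₀)
    (fun _ ↦ mul_ne_zero (one_add_C_mul_X_ne_zero _) (one_add_C_mul_X_ne_zero _))
    (by simp) (fun s ↦ ?_) (fun s ↦ ?_) s
  · rw [show 2 * (s + 1) = 2 * s + 1 + 1 by ring, qbinomSeries_add_one hv,
      qbinomSeries_add_one hv, map_mul, rescale_one_add_C_mul_X, rescale_rescale, h₁, ← sq,
      mul_assoc]
  · simp only [qbinomSeries_add_one (sq_zpow_injective hv) s, map_mul, rescale_one_add_C_mul_X,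
      rescale_rescale, sq_zpow, mul_neg, h₁, h₂, mul_comm (v ^ 2)]
    ring

theorem qbinomSeries_two_mul_add_one (hv : Injective (v ^ · : ℤ → F)) (s : ℤ) :
    qbinomSeries v (2 * s + 1) = qbinomSeries (v ^ 2) (s + 1) * qbinomSeries (v ^ 2) s := by
  rw [qbinomSeries_add_one hv, qbinomSeries_two_mul hv, qbinomSeries_add_one (sq_zpow_injective hv),
    map_mul, rescale_rescale, rescale_rescale, inv_mul_cancel₀ (ne_zero_of_zpow_injective hv),
    ← sq, sq_zpow, mul_neg]
  simp [mul_assoc]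

theorem rescale_qbinomSeries_sq_mul_even (hv : Injective (v ^ · : ℤ → F)) (u s : ℤ) :
    rescale (v ^ u) (qbinomSeries (v ^ 2) (u - 1 + s)) *
        rescale (v ^ (-u)) (qbinomSeries (v ^ 2) s) =
      rescale (v ^ (u + 2 * s)) (qbinomSeries (v ^ 2) (u - 1)) *
        rescale (v ^ (1 - u)) (qbinomSeries v (2 * s)) := by
  have hv₀ := ne_zero_of_zpow_injective hv
  rw [qbinomSeries_add (sq_zpow_injective hv), qbinomSeries_two_mul hv, ← zpow_neg_one v]
  simp only [map_mul, rescale_rescale, sq_zpow, ← zpow_add₀ hv₀, ← zpow_one_add₀ hv₀]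
  ring_nf

theorem rescale_qbinomSeries_sq_mul_odd (hv : Injective (v ^ · : ℤ → F)) (u s : ℤ) :
    rescale (v ^ (u - 1)) (qbinomSeries (v ^ 2) (u + s)) *
        rescale (v ^ (-(u - 1))) (qbinomSeries (v ^ 2) s) =
      rescale (v ^ (u + (2 * s + 1))) (qbinomSeries (v ^ 2) (u - 1)) *
        rescale (v ^ (1 - u)) (qbinomSeries v (2 * s + 1)) := by
  rw [show u + s = u - 1 + (s + 1) by ring, qbinomSeries_add (sq_zpow_injective hv),
    qbinomSeries_two_mul_add_one hv]
  simp only [map_mul, rescale_rescale, sq_zpow, ← zpow_add₀ (ne_zero_of_zpow_injective hv)]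
  ring_nf

theorem coeff_rescale_qbinomSeries_mul (hv₀ : v ≠ 0) (x y : F) (a b n k : ℤ) (m : ℕ) :
    coeff m (rescale (v ^ a) (qbinomSeries x n) * rescale (v ^ b) (qbinomSeries y k)) =
      ∑ p ∈ antidiagonal m, v ^ (a * p.1 + b * p.2) * qbinom x n p.1 * qbinom y k p.2 := by
  simp only [coeff_mul, coeff_rescale, qbinomSeries, coeff_mk]
  refine sum_congr rfl fun p _ ↦ ?_
  rw [zpow_add₀ hv₀, zpow_mul, zpow_mul, zpow_natCast, zpow_natCast]
  ring

theorem sum_antidiagonal_qbinom_sq_of_even (hv : Injective (v ^ · : ℤ → F)) (u : ℤ) {n : ℤ}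
    (hn : Even n) (m : ℕ) :
    ∑ p ∈ antidiagonal m, v ^ (u * (p.1 - p.2)) * qbinom (v ^ 2) (u - 1 + n / 2) p.1 *
        qbinom (v ^ 2) (n / 2) p.2 =
      ∑ p ∈ antidiagonal m, v ^ ((u + n) * p.1 + (1 - u) * p.2) * qbinom (v ^ 2) (u - 1) p.1 *
        qbinom v n p.2 := by
  have hv₀ := ne_zero_of_zpow_injective hv
  obtain ⟨s, rfl⟩ := hn.two_dvd
  rw [Int.mul_ediv_cancel_left _ two_ne_zero, ← coeff_rescale_qbinomSeries_mul hv₀,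
    ← rescale_qbinomSeries_sq_mul_even hv, coeff_rescale_qbinomSeries_mul hv₀]
  simp only [mul_sub, neg_mul, ← sub_eq_add_neg]

theorem sum_antidiagonal_qbinom_sq_of_odd (hv : Injective (v ^ · : ℤ → F)) (u : ℤ) {n : ℤ}
    (hn : Odd n) (m : ℕ) :
    ∑ p ∈ antidiagonal m, v ^ ((u - 1) * (p.1 - p.2)) * qbinom (v ^ 2) (u + (n - 1) / 2) p.1 *
        qbinom (v ^ 2) ((n - 1) / 2) p.2 =
      ∑ p ∈ antidiagonal m, v ^ ((u + n) * p.1 + (1 - u) * p.2) * qbinom (v ^ 2) (u - 1) p.1 *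
        qbinom v n p.2 := by
  have hv₀ := ne_zero_of_zpow_injective hv
  obtain ⟨s, rfl⟩ := hn
  rw [add_sub_cancel_right, Int.mul_ediv_cancel_left _ two_ne_zero,
    ← coeff_rescale_qbinomSeries_mul hv₀, ← rescale_qbinomSeries_sq_mul_odd hv,
    coeff_rescale_qbinomSeries_mul hv₀]
  simp only [mul_sub (u - 1), neg_mul, ← sub_eq_add_neg]

end GeneratingSeries

theorem T_zero_right (w : ℤ) (u : ℕ) :
    T w u 0 = ∑ p ∈ antidiagonal u, ∑ x ∈ antidiagonal p.1,
      (-1) ^ (w - p.2) * qbinom qq w p.2 * (qq ^ ((u + (w - p.2)) * x.1 + (1 - u : ℤ) * x.2) *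
        qbinom (qq ^ 2) (u - 1) x.1 * qbinom qq (w - p.2) x.2) := by
  unfold T
  simp only [zero_add, sum_range_one, Nat.cast_zero, neg_zero, zero_mul, add_zero, sub_zero,
    qbinom_zero_right, mul_one]
  rw [sum_range_sum_range_eq_sum_antidiagonal u (fun c e r ↦ if Even (w - (r : ℤ)) then
      qq ^ ((u : ℤ) * (c - e)) * qbinom qq w r *
        qbinom (qq ^ 2) (u - 1 + (w - r) / 2) c * qbinom (qq ^ 2) ((w - r) / 2) e else 0),
    sum_range_sum_range_eq_sum_antidiagonal u (fun c e r ↦ if ¬ Even (w - (r : ℤ)) then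
      qq ^ ((u - 1 : ℤ) * (c - e)) * qbinom qq w r *
        qbinom (qq ^ 2) (u + (w - r - 1) / 2) c * qbinom (qq ^ 2) ((w - r - 1) / 2) e else 0),
    ← sum_sub_distrib]
  refine sum_congr rfl fun p _ ↦ ?_
  rw [← mul_sum]
  rcases Int.even_or_odd (w - p.2) with h | h
  · rw [← sum_antidiagonal_qbinom_sq_of_even qq_zpow_injective u h, h.neg_one_zpow, mul_sum]
    simp only [h, not_true_eq_false, if_true, if_false, sum_const_zero, sub_zero]
    exact sum_congr rfl fun x _ ↦ by ring
  · rw [← sum_antidiagonal_qbinom_sq_of_odd qq_zpow_injective u h, h.neg_one_zpow, mul_sum]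
    simp only [Int.not_even_iff_odd.2 h, not_false_eq_true, if_true, if_false, sum_const_zero,
      zero_sub, ← sum_neg_distrib]
    exact sum_congr rfl fun x _ ↦ by ring

theorem sum_antidiagonal_neg_one_zpow_mul_qbinom {v : F}
    (hv : Function.Injective (v ^ · : ℤ → F)) (w : ℤ) {u j k : ℕ} (hu : 0 < u)
    (hjk : j + k = u) :
    ∑ x ∈ antidiagonal k, (-1) ^ (w - x.2) * qbinom v w x.2 *
      (v ^ ((u + (w - x.2)) * j + (1 - u : ℤ) * x.1) * qbinom (v ^ 2) (u - 1) j *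
        qbinom v (w - x.2) x.1) = 0 := by
  have hv₀ := ne_zero_of_zpow_injective hv
  rcases k with _ | k
  · obtain rfl : j = u := hjk
    have top := qbinom_eq_zero_of_lt (v ^ 2) (Nat.sub_one_lt_of_lt hu)
    rw [Nat.cast_pred hu] at top
    simp [top]
  · have factor : ∀ x ∈ antidiagonal (k + 1), (-1) ^ (w - x.2) * qbinom v w x.2 *
        (v ^ ((u + (w - x.2)) * j + (1 - u : ℤ) * x.1) * qbinom (v ^ 2) (u - 1) j *
          qbinom v (w - x.2) x.1) =
        (-1) ^ w * v ^ ((u + w) * j + (1 - u : ℤ) * (k + 1)) * qbinom (v ^ 2) (u - 1) j *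
          ((-1) ^ x.2 * v ^ (x.2 * k) * (qbinom v w x.2 * qbinom v (w - x.2) x.1)) := by
      rintro ⟨i, r⟩ hir
      have sign : (-1 : F) ^ (w - r) = (-1) ^ w * (-1) ^ r := by
        rw [zpow_sub₀ (neg_ne_zero.2 one_ne_zero), zpow_natCast, div_eq_mul_inv, ← inv_pow,
          inv_neg_one]
      have exponent : (u + (w - r)) * j + (1 - u : ℤ) * i =
          (u + w) * j + (1 - u : ℤ) * (k + 1) + (r * k : ℕ) := by
        have hi : (i : ℤ) = k + 1 - r := by grind [HasAntidiagonal.mem_antidiagonal]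
        rw [← hjk, hi]
        push_cast
        ring
      rw [sign, exponent, zpow_add₀ hv₀, zpow_natCast]
      ring
    rw [sum_congr rfl factor, ← mul_sum, ← Nat.sum_antidiagonal_swap]
    simp only [Prod.fst_swap, Prod.snd_swap]
    rw [sum_antidiagonal_neg_one_pow_mul_qbinom_mul_qbinom hv, mul_zero]

/-- `T(w,u,0) = 0` for every integer `w` and every positive integer `u`. -/
theorem T_ell_zero (w : ℤ) (u : ℕ) (hu : 0 < u) : T w u 0 = 0 := by
  rw [T_zero_right, ← sum_antidiagonal_sum_antidiagonal_assoc u fun j i r ↦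
    (-1) ^ (w - r) * qbinom qq w r * (qq ^ ((u + (w - r)) * j + (1 - u : ℤ) * i) *
      qbinom (qq ^ 2) (u - 1) j * qbinom qq (w - r) i)]
  exact sum_eq_zero fun p hp ↦ sum_antidiagonal_neg_one_zpow_mul_qbinom qq_zpow_injective w hu
    (HasAntidiagonal.mem_antidiagonal.1 hp)

end
end

section
/- Let m ∈ ℤ≥0, λ ∈ ℤ, and y, u, ℓ ∈ ℤ≥0 with ℓ + y + 2u ≤ 2m + 1. Then S(y,u,ℓ,λ) = T(2m+2−2λ−2ℓ−4u−y, u, ℓ), where S(y,u,ℓ,λ) = Σ_{0 ≤ n ≤ 2m, n even} Σ_{c,e,r ≥ 0, c+e+r=u} q^{(u+y−n)(ℓ+u−1)+c−e} C_q(ℓ, −u−y−e+c+n) C_q(2m+2−2λ−5u−3ℓ−2y−e+c+n, r) C_{q²}(m−λ−2u−ℓ−y+c+n/2, c) C_{q²}(m+1−λ−2ℓ−y−3u+n/2+c, e) − Σ_{1 ≤ n ≤ 2m+1, n odd} Σ_{c,e,r ≥ 0, c+e+r=u} q^{(u+y−n)(ℓ+u−1)} C_q(ℓ, −u−y−e+c+n)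 C_q(2m+2−2λ−5u−3ℓ−2y−e+c+n, r) C_{q²}(m−λ−2u−ℓ−y+c+(n+1)/2, c) C_{q²}(m−λ−2ℓ−y−3u+(n+1)/2+c, e). -/
open Finset

noncomputable section

/-- The function `S(y,u,ℓ,λ)` of [CLW, (4.8)] (depending also on `m`). -/
noncomputable def S (m : ℕ) (lmd : ℤ) (y u ℓ : ℕ) : F :=
  (∑ n ∈ range (2 * m + 2), ∑ c ∈ range (u + 1), ∑ e ∈ range (u + 1 - c),
      (let r : ℕ := u - c - e;
       if Even n then
         qq ^ (((u : ℤ) + (y : ℤ) - (n : ℤ)) * ((ℓ : ℤ) + (u : ℤ) - 1) + (c : ℤ) - (e : ℤ))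
           * qbinom qq (ℓ : ℤ) (-(u : ℤ) - (y : ℤ) - (e : ℤ) + (c : ℤ) + (n : ℤ))
           * qbinom qq (2 * (m : ℤ) + 2 - 2 * lmd - 5 * (u : ℤ) - 3 * (ℓ : ℤ) - 2 * (y : ℤ)
               - (e : ℤ) + (c : ℤ) + (n : ℤ)) (r : ℤ)
           * qbinom (qq ^ 2) ((m : ℤ) - lmd - 2 * (u : ℤ) - (ℓ : ℤ) - (y : ℤ) + (c : ℤ)
               + (n : ℤ) / 2) (c : ℤ)
           * qbinom (qq ^ 2) ((m : ℤ) + 1 - lmd - 2 * (ℓ : ℤ) - (y : ℤ) - 3 * (u : ℤ)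
               + (n : ℤ) / 2 + (c : ℤ)) (e : ℤ)
       else 0))
  - (∑ n ∈ range (2 * m + 2), ∑ c ∈ range (u + 1), ∑ e ∈ range (u + 1 - c),
      (let r : ℕ := u - c - e;
       if ¬ Even n then
         qq ^ (((u : ℤ) + (y : ℤ) - (n : ℤ)) * ((ℓ : ℤ) + (u : ℤ) - 1))
           * qbinom qq (ℓ : ℤ) (-(u : ℤ) - (y : ℤ) - (e : ℤ) + (c : ℤ) + (n : ℤ))
           * qbinom qq (2 * (m : ℤ) + 2 - 2 * lmd - 5 * (u : ℤ) - 3 * (ℓ : ℤ) - 2 * (y : ℤ)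
               - (e : ℤ) + (c : ℤ) + (n : ℤ)) (r : ℤ)
           * qbinom (qq ^ 2) ((m : ℤ) - lmd - 2 * (u : ℤ) - (ℓ : ℤ) - (y : ℤ) + (c : ℤ)
               + ((n : ℤ) + 1) / 2) (c : ℤ)
           * qbinom (qq ^ 2) ((m : ℤ) - lmd - 2 * (ℓ : ℤ) - (y : ℤ) - 3 * (u : ℤ)
               + ((n : ℤ) + 1) / 2 + (c : ℤ)) (e : ℤ)
       else 0))

/-!
For fixed `c + e + r = u`, the substitution `t = n - (u + y + e - c)` turns the summand of `S` at
`n` into the summand of `T` at `t`, the parities of `n` and `t + w - r` being the same. The factor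
`C_q(ℓ, t)` vanishes unless `0 ≤ t ≤ ℓ`, and `ℓ + y + 2u ≤ 2m + 1` places the window
`u + y + e - c ≤ n ≤ u + y + e - c + ℓ` inside the range `0 ≤ n ≤ 2m + 1` of the sum defining `S`.
-/

theorem sum_range_sub_eq_sum_range {M : Type*} [AddCommMonoid M] {f : ℤ → M} {k : ℤ} {l N : ℕ}
    (hk : 0 ≤ k) (hN : k + l ≤ N) (hf : ∀ t : ℤ, t < 0 ∨ l ≤ t → f t = 0) :
    ∑ n ∈ range N, f (n - k) = ∑ t ∈ range l, f t := by
  lift k to ℕ using hk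
  obtain ⟨d, rfl⟩ : ∃ d, N = k + (l + d) := ⟨N - k - l, by omega⟩
  have below_window : ∑ n ∈ range k, f (n - k) = 0 :=
    sum_eq_zero fun n hn => hf _ (Or.inl (by have := mem_range.mp hn; omega))
  have above_window : ∑ n ∈ range d, f ↑(l + n) = 0 :=
    sum_eq_zero fun n _ => hf _ (Or.inr (by omega))
  simp only [sum_range_add _ k, below_window, zero_add, Nat.cast_add k, add_sub_cancel_left]
  rw [sum_range_add, above_window, add_zero]

theorem qbinom_of_neg (v : F) (n : ℤ) {d : ℤ} (hd : d < 0) : qbinom v n d = 0 :=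
  if_pos hd

theorem qbinom_natCast_of_lt (v : F) {l : ℕ} {d : ℤ} (hd : l < d) : qbinom v l d = 0 := by
  have qint_zero : qint v (l - (l : ℤ)) = 0 := by simp [qint]
  rw [qbinom, if_neg (by omega), prod_eq_zero (mem_range.mpr (by omega)) qint_zero, zero_div]

/-- The signed summand of `T w u ℓ` at `(c, e, r, t)`: the even and odd sums are merged into one.
The index `t` ranges over `ℤ`, so that it can be replaced by an arbitrary translate of the index of
`S`. -/
def tSummand (w : ℤ) (u ℓ c e r : ℕ) (t : ℤ) : F :=
  if Even (t + w - r) then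
    qq ^ (-t * (ℓ + u - 1) + (ℓ + u) * ((c : ℤ) - e))
      * qbinom qq ℓ t * qbinom qq (w + t - ℓ) r
      * qbinom (qq ^ 2) (u - 1 + (w + t - r) / 2) c
      * qbinom (qq ^ 2) ((w + t - r) / 2 - ℓ) e
  else
    -(qq ^ (-t * (ℓ + u - 1) + (ℓ + u - 1) * ((c : ℤ) - e))
      * qbinom qq ℓ t * qbinom qq (w + t - ℓ) r
      * qbinom (qq ^ 2) (u + (w + t - r - 1) / 2) c
      * qbinom (qq ^ 2) ((w + t - r - 1) / 2 - ℓ) e)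

/-- The signed summand of `S m lmd y u ℓ` at `(c, e, r, n)`: the even and odd sums are merged into
one. -/
def sSummand (m : ℕ) (lmd : ℤ) (y u ℓ c e r n : ℕ) : F :=
  if Even n then
    qq ^ (((u : ℤ) + y - n) * (ℓ + u - 1) + c - e)
      * qbinom qq ℓ (-u - y - e + c + n)
      * qbinom qq (2 * m + 2 - 2 * lmd - 5 * u - 3 * ℓ - 2 * y - e + c + n) r
      * qbinom (qq ^ 2) (m - lmd - 2 * u - ℓ - y + c + n / 2) c
      * qbinom (qq ^ 2) (m + 1 - lmd - 2 * ℓ - y - 3 * u + n / 2 + c) e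
  else
    -(qq ^ (((u : ℤ) + y - n) * (ℓ + u - 1))
      * qbinom qq ℓ (-u - y - e + c + n)
      * qbinom qq (2 * m + 2 - 2 * lmd - 5 * u - 3 * ℓ - 2 * y - e + c + n) r
      * qbinom (qq ^ 2) (m - lmd - 2 * u - ℓ - y + c + (n + 1) / 2) c
      * qbinom (qq ^ 2) (m - lmd - 2 * ℓ - y - 3 * u + (n + 1) / 2 + c) e)

theorem T_eq_sum_tSummand (w : ℤ) (u ℓ : ℕ) :
    T w u ℓ = ∑ c ∈ range (u + 1), ∑ e ∈ range (u + 1 - c), ∑ t ∈ range (ℓ + 1),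
      tSummand w u ℓ c e (u - c - e) t := by
  simp only [T, ← sum_sub_distrib]
  refine sum_congr rfl fun c _ => sum_congr rfl fun e _ => sum_congr rfl fun t _ => ?_
  rw [tSummand, ite_not]
  split_ifs
  · exact sub_zero _
  · exact zero_sub _

theorem S_eq_sum_sSummand (m : ℕ) (lmd : ℤ) (y u ℓ : ℕ) :
    S m lmd y u ℓ = ∑ c ∈ range (u + 1), ∑ e ∈ range (u + 1 - c), ∑ n ∈ range (2 * m + 2),
      sSummand m lmd y u ℓ c e (u - c - e) n := by
  have signed_sum : S m lmd y u ℓ = ∑ n ∈ range (2 * m + 2), ∑ c ∈ range (u + 1),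
      ∑ e ∈ range (u + 1 - c), sSummand m lmd y u ℓ c e (u - c - e) n := by
    simp only [S, ← sum_sub_distrib]
    refine sum_congr rfl fun n _ => sum_congr rfl fun c _ => sum_congr rfl fun e _ => ?_
    rw [sSummand, ite_not]
    split_ifs
    · exact sub_zero _
    · exact zero_sub _
  rw [signed_sum, sum_comm]
  exact sum_congr rfl fun c _ => sum_comm

theorem tSummand_eq_zero (w : ℤ) (u : ℕ) {ℓ : ℕ} (c e r : ℕ) {t : ℤ} (ht : t < 0 ∨ ℓ < t) :
    tSummand w u ℓ c e r t = 0 := by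
  have qbinom_eq_zero : qbinom qq ℓ t = 0 :=
    ht.elim (qbinom_of_neg qq ℓ) (qbinom_natCast_of_lt qq)
  simp [tSummand, qbinom_eq_zero]

theorem sSummand_eq_tSummand (m : ℕ) (lmd : ℤ) (y ℓ n : ℕ) {u c e r : ℕ} (hu : c + e + r = u) :
    sSummand m lmd y u ℓ c e r n
      = tSummand (2 * m + 2 - 2 * lmd - 2 * ℓ - 4 * u - y) u ℓ c e r (n - (u + y + e - c)) := by
  unfold sSummand tSummand
  generalize hw : (2 * m + 2 - 2 * lmd - 2 * ℓ - 4 * u - y : ℤ) = w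
  generalize ht : (n - (u + y + e - c) : ℤ) = t
  have even_iff : Even n ↔ Even (t + w - r) := by
    rw [Nat.even_iff, Int.even_iff]
    omega
  have ell_bottom : (-u - y - e + c + n : ℤ) = t := by omega
  have r_top : (2 * m + 2 - 2 * lmd - 5 * u - 3 * ℓ - 2 * y - e + c + n : ℤ) = w + t - ℓ := by
    omega
  rw [ell_bottom, r_top]
  by_cases hn : Even n
  · rw [if_pos hn, if_pos (even_iff.mp hn)]
    rw [Nat.even_iff] at hn
    have exponent : ((u + y - n) * (ℓ + u - 1) + c - e : ℤ)
        = -t * (ℓ + u - 1) + (ℓ + u) * (c - e) := by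
      rw [← ht]; ring
    have c_top : (m - lmd - 2 * u - ℓ - y + c + n / 2 : ℤ) = u - 1 + (w + t - r) / 2 := by omega
    have e_top : (m + 1 - lmd - 2 * ℓ - y - 3 * u + n / 2 + c : ℤ) = (w + t - r) / 2 - ℓ := by
      omega
    rw [exponent, c_top, e_top]
  · rw [if_neg hn, if_neg (even_iff.not.mp hn)]
    rw [Nat.not_even_iff] at hn
    have exponent : ((u + y - n) * (ℓ + u - 1) : ℤ)
        = -t * (ℓ + u - 1) + (ℓ + u - 1) * (c - e) := by
      rw [← ht]; ring
    have c_top : (m - lmd - 2 * u - ℓ - y + c + (n + 1) / 2 : ℤ) = u + (w + t - r - 1) / 2 := by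
      omega
    have e_top : (m - lmd - 2 * ℓ - y - 3 * u + (n + 1) / 2 + c : ℤ)
        = (w + t - r - 1) / 2 - ℓ := by
      omega
    rw [exponent, c_top, e_top]

/-- `S(y,u,ℓ,λ) = T(2m+2−2λ−2ℓ−4u−y, u, ℓ)` for `ℓ + y + 2u ≤ 2m + 1`. -/
theorem S_eq_T (m : ℕ) (lmd : ℤ) (y u ℓ : ℕ) (h : ℓ + y + 2 * u ≤ 2 * m + 1) :
    S m lmd y u ℓ
      = T (2 * (m : ℤ) + 2 - 2 * lmd - 2 * (ℓ : ℤ) - 4 * (u : ℤ) - (y : ℤ)) u ℓ := by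
  rw [S_eq_sum_sSummand, T_eq_sum_tSummand]
  refine sum_congr rfl fun c hc => sum_congr rfl fun e he => ?_
  rw [mem_range] at hc he
  set w : ℤ := 2 * m + 2 - 2 * lmd - 2 * ℓ - 4 * u - y
  calc ∑ n ∈ range (2 * m + 2), sSummand m lmd y u ℓ c e (u - c - e) n
      = ∑ n ∈ range (2 * m + 2), tSummand w u ℓ c e (u - c - e) (n - (u + y + e - c)) :=
        sum_congr rfl fun n _ => sSummand_eq_tSummand m lmd y ℓ n (by omega)
    _ = ∑ t ∈ range (ℓ + 1), tSummand w u ℓ c e (u - c - e) t :=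
        sum_range_sub_eq_sum_range (by omega) (by omega) fun t ht =>
          tSummand_eq_zero w u c e _ (by omega)

end
end
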